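/- There is a universal constant c₂ > 0 such that the following holds. Let ε ∈ (0,1), n ≥ 2, and let q be an integer with q ≥ c₂ k² (log n)/ε⁴. Then with probability at least 1 − 2n^{−3} over the random samples, simultaneously for all k-clusterings C' of V: |f(C') − f̂(C')| ≤ 3ε·d(C, C'), i.e., f̂ is a 3ε-smooth relative regret approximation with respect to the pivotal clustering C. -/

import Mathlib

open Finset

attribute [local instance] Classical.propDecidable

/-- A `k`-clustering of `V` is encoded by its cluster-assignment function `Cl : V → Fin k`;
two points are in the same cluster iff they have the same assigned index.
`cluster Cl i` is the `i`-th cluster `C_i`, as a finset. -/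
noncomputable def cluster {V : Type*} [Fintype V] {k : ℕ} (Cl : V → Fin k) (i : Fin k) : Finset V :=
  Finset.univ.filter fun v => Cl v = i

/-- `cost_{u,v}(C) = 1[(u,v) ∈ E]·1[u ≢_C v] + 1[(u,v) ∉ E]·1[u ≡_C v]`. -/
noncomputable def costuv {V : Type*} {k : ℕ} (G : SimpleGraph V) (Cl : V → Fin k) (u v : V) : ℝ :=
  (if G.Adj u v then (if Cl u = Cl v then 0 else 1) else (if Cl u = Cl v then 1 else 0))

/-- `cost(C)`: the number of unordered pairs of distinct points on which the clustering
`Cl` disagrees with the graph `G` (each unordered pair counted once, via half the sum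
over ordered pairs). -/
noncomputable def cost {V : Type*} [Fintype V] {k : ℕ} (G : SimpleGraph V) (Cl : V → Fin k) : ℝ :=
  (1 / 2) * ∑ u : V, ∑ v : V, if u ≠ v then costuv G Cl u v else 0

/-- The disagreement distance between two `k`-clusterings:
`d(C,C') = (1/2) Σ_{u ≠ v} (1[u ≡_{C'} v]·1[u ≢_C v] + 1[u ≡_C v]·1[u ≢_{C'} v])`. -/
noncomputable def dd {V : Type*} [Fintype V] {k : ℕ} (Cl Cl' : V → Fin k) : ℝ :=
  (1 / 2) * ∑ u : V, ∑ v : V, if u ≠ v then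
      ((if Cl' u = Cl' v ∧ ¬Cl u = Cl v then (1 : ℝ) else 0) +
        (if Cl u = Cl v ∧ ¬Cl' u = Cl' v then (1 : ℝ) else 0))
    else 0

/-- `f_{u,v}(C') = cost_{u,v}(C') - cost_{u,v}(C)`. -/
noncomputable def fuv {V : Type*} {k : ℕ} (G : SimpleGraph V) (Cl Cl' : V → Fin k) (u v : V) : ℝ :=
  costuv G Cl' u v - costuv G Cl u v

/-!
A pair of points contributes to `f(C')` only if `C` and `C'` disagree on it, and its contribution is
then a sign that does not depend on `C'`. Over `C_i × C_j` the error `f̂ - f` is therefore a sum,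
over the clusters `C'_l`, of signed sampling errors on rectangles `A × B`, where `A = C_i ∩ C'_l`
and `B` consists of the points of `C_j` that disagree with those of `A`. By Bernstein's inequality
with variance proxy `|A| |B|`, all rectangles behave simultaneously: up to complement there are at
most `n ^ s` subsets `A` with `s = min(|A|, |C_i \ A|)`, so the union bound only costs an exponent
of order `s log n`, and this is paid for by the `|A| |C_i \ A|` disagreements inside `C_i`, and
likewise for `B` and `C_j`.

The payment falls short only if `C_i` is much smaller than `C_j` and `B` is a minority of `C_j`. The
error is then at most the sampled plus the expected number of hits of `C_i × B`, a bound that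
requires no union over `A` and is dominated by the disagreements inside `C_j`. Each cluster's inner
disagreements are charged `O(k)` times, which is why rectangles are sampled to accuracy `ε / (2k)`.
-/

open scoped BigOperators

section FiniteProbability

theorem expect_pi_prod {K ι : Type*} [Field K] [CharZero K] [Fintype ι] [DecidableEq ι]
    {α : ι → Type*} [∀ i, Fintype (α i)] (f : ∀ i, α i → K) :
    𝔼 x : ∀ i, α i, ∏ i, f i (x i) = ∏ i, 𝔼 a, f i a := by
  simp only [Fintype.expect_eq_sum_div_card, prod_div_distrib, prod_univ_sum,
    Fintype.piFinset_univ, Fintype.card_pi, Nat.cast_prod]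

variable {Ω : Type*} [Fintype Ω]

/-- The probability of the event `P` at a uniformly random point of the finite space `Ω`. -/
noncomputable def prob (P : Ω → Prop) : ℝ := 𝔼 ω, if P ω then 1 else 0

theorem prob_eq_card_div_card (P : Ω → Prop) : prob P = #{ω | P ω} / Fintype.card Ω := by
  rw [prob, Fintype.expect_eq_sum_div_card, sum_boole]

theorem prob_mono {P Q : Ω → Prop} (h : ∀ ω, P ω → Q ω) : prob P ≤ prob Q :=
  expect_le_expect fun ω _ => by
    split_ifs with hP hQ
    exacts [le_rfl, absurd (h ω hP) hQ, zero_le_one, le_rfl]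

theorem prob_not [Nonempty Ω] (P : Ω → Prop) : prob (fun ω => ¬ P ω) = 1 - prob P := by
  rw [eq_sub_iff_add_eq, prob, prob, ← expect_add_distrib, ← Fintype.expect_one (ι := Ω)]
  refine expect_congr rfl fun ω _ => ?_
  by_cases hP : P ω <;> simp [hP]

theorem prob_exists_mem_le {ι : Type*} (s : Finset ι) (P : ι → Ω → Prop) :
    prob (fun ω => ∃ i ∈ s, P i ω) ≤ ∑ i ∈ s, prob (P i) := by
  simp only [prob]
  rw [← expect_sum_comm]
  refine expect_le_expect fun ω _ => ?_
  have hnonneg : ∀ i ∈ s, (0 : ℝ) ≤ if P i ω then 1 else 0 := fun i _ => by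
    split_ifs <;> simp
  split_ifs with hω
  · obtain ⟨i, hi, hP⟩ := hω
    simpa [hP] using single_le_sum hnonneg hi
  · exact sum_nonneg hnonneg

theorem prob_lt_le_expect_exp (X : Ω → ℝ) (T : ℝ) {θ : ℝ} (hθ : 0 ≤ θ) :
    prob (fun ω => T < X ω) ≤ Real.exp (-(θ * T)) * 𝔼 ω, Real.exp (θ * X ω) := by
  rw [prob, mul_expect]
  refine expect_le_expect fun ω _ => ?_
  rw [← Real.exp_add]
  split_ifs with hω
  · exact Real.one_le_exp (by linarith [mul_le_mul_of_nonneg_left hω.le hθ])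
  · positivity

end FiniteProbability

section Bernstein

variable {Ω : Type*} [Fintype Ω]

/-- The real random variable `X` on a finite uniform space has the moment generating function
bound from which a Bernstein tail with variance proxy `v` follows. Only tilts `θ ∈ [0, 1]` are
constrained, which suits deviations of variables bounded by `1`. -/
def HasBernsteinMGF (X : Ω → ℝ) (v : ℝ) : Prop :=
  ∀ θ ∈ Set.Icc (0 : ℝ) 1, 𝔼 ω, Real.exp (θ * X ω) ≤ Real.exp (θ ^ 2 * v)

/-- The deviation allowed by Bernstein's inequality at variance proxy `v` and failure
probability `exp (-W)`. -/
noncomputable def bernsteinRadius (v W : ℝ) : ℝ := 2 * √(v * W) + 2 * W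

theorem exists_mem_Icc_sq_mul_add_le_mul_bernsteinRadius {v W : ℝ} (hW : 0 ≤ W) :
    ∃ θ ∈ Set.Icc (0 : ℝ) 1, θ ^ 2 * v + W ≤ θ * bernsteinRadius v W := by
  rcases le_or_gt v W with hvW | hvW
  · refine ⟨1, ⟨zero_le_one, le_rfl⟩, ?_⟩
    rw [bernsteinRadius]
    linarith [Real.sqrt_nonneg (v * W)]
  · have hv' : 0 < v := hW.trans_lt hvW
    refine ⟨√(W / v), ⟨Real.sqrt_nonneg _, Real.sqrt_le_one.2 ((div_le_one hv').2 hvW.le)⟩, ?_⟩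
    have hsqrt : √(W / v) * √(v * W) = W := by
      rw [← Real.sqrt_mul (by positivity), show W / v * (v * W) = W ^ 2 by field_simp,
        Real.sqrt_sq hW]
    calc √(W / v) ^ 2 * v + W = 2 * (√(W / v) * √(v * W)) := by
          rw [hsqrt, Real.sq_sqrt (by positivity), div_mul_cancel₀ _ hv'.ne']
          ring
      _ ≤ 2 * (√(W / v) * √(v * W)) + √(W / v) * (2 * W) := le_add_of_nonneg_right (by positivity)
      _ = √(W / v) * bernsteinRadius v W := by
          rw [bernsteinRadius]
          ring

namespace HasBernsteinMGF

theorem mono {X : Ω → ℝ} {v w : ℝ} (hX : HasBernsteinMGF X v) (hvw : v ≤ w) :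
    HasBernsteinMGF X w := fun θ hθ => (hX θ hθ).trans (by gcongr)

theorem prob_lt_le {X : Ω → ℝ} {v : ℝ} (hX : HasBernsteinMGF X v) {W : ℝ} (hW : 0 ≤ W) :
    prob (fun ω => bernsteinRadius v W < X ω) ≤ Real.exp (-W) := by
  obtain ⟨θ, hθ, hle⟩ := exists_mem_Icc_sq_mul_add_le_mul_bernsteinRadius (v := v) hW
  calc prob (fun ω => bernsteinRadius v W < X ω)
      ≤ Real.exp (-(θ * bernsteinRadius v W)) * 𝔼 ω, Real.exp (θ * X ω) :=
        prob_lt_le_expect_exp X _ hθ.1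
    _ ≤ Real.exp (-(θ * bernsteinRadius v W)) * Real.exp (θ ^ 2 * v) := by
        gcongr
        exact hX θ hθ
    _ ≤ Real.exp (-W) := by
        rw [← Real.exp_add]
        gcongr
        linarith

theorem pi_sum {ι : Type*} [Fintype ι] [DecidableEq ι] {α : ι → Type*} [∀ i, Fintype (α i)]
    {X : ∀ i, α i → ℝ} {v : ι → ℝ} (s : Finset ι) (hX : ∀ i ∈ s, HasBernsteinMGF (X i) (v i)) :
    HasBernsteinMGF (fun x : ∀ i, α i => ∑ i ∈ s, X i (x i)) (∑ i ∈ s, v i) := by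
  intro θ hθ
  let Y : ∀ i, α i → ℝ := fun i a => if i ∈ s then Real.exp (θ * X i a) else 1
  have hY : ∀ i, 𝔼 a, Y i a ≤ if i ∈ s then Real.exp (θ ^ 2 * v i) else 1 := by
    intro i
    by_cases hi : i ∈ s
    · simpa only [Y, hi, if_true] using hX i hi θ hθ
    · rcases isEmpty_or_nonempty (α i) with _ | _ <;> simp [Y, hi]
  have hY_nonneg : ∀ i, 0 ≤ 𝔼 a, Y i a := fun i => expect_nonneg fun a _ => by
    simp only [Y]
    split_ifs <;> positivity
  calc 𝔼 x : ∀ i, α i, Real.exp (θ * ∑ i ∈ s, X i (x i))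
      = 𝔼 x : ∀ i, α i, ∏ i, Y i (x i) := by
        simp only [Y, mul_sum, Real.exp_sum, prod_ite_mem, univ_inter]
    _ = ∏ i, 𝔼 a, Y i a := expect_pi_prod Y
    _ ≤ ∏ i, if i ∈ s then Real.exp (θ ^ 2 * v i) else 1 :=
        prod_le_prod (fun i _ => hY_nonneg i) fun i _ => hY i
    _ = Real.exp (θ ^ 2 * ∑ i ∈ s, v i) := by
        rw [prod_ite_mem, univ_inter, mul_sum, Real.exp_sum]

theorem comp_eval {ι : Type*} [Fintype ι] [DecidableEq ι] {α : ι → Type*} [∀ i, Fintype (α i)]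
    {j : ι} {X : α j → ℝ} {v : ℝ} (hX : HasBernsteinMGF X v) :
    HasBernsteinMGF (fun x : ∀ i, α i => X (x j)) v := by
  have hpi := pi_sum (X := fun i a => if h : i = j then X (h ▸ a) else 0) (v := fun _ => v) {j}
    fun i hi => by
      obtain rfl := mem_singleton.1 hi
      simpa only [dite_true] using hX
  simpa only [sum_singleton, dite_true] using hpi

end HasBernsteinMGF

theorem hasBernsteinMGF_sub_expect [Nonempty Ω] {f : Ω → ℝ} (hf : ∀ ω, |f ω| ≤ 1) :
    HasBernsteinMGF (fun ω => f ω - 𝔼 ω', f ω') (𝔼 ω, f ω ^ 2) := by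
  intro θ hθ
  have hpoint : ∀ ω, Real.exp (θ * f ω) ≤ 1 + θ * f ω + θ ^ 2 * f ω ^ 2 := fun ω => by
    have hle : |θ * f ω| ≤ 1 := by
      rw [abs_mul, abs_of_nonneg hθ.1]
      exact mul_le_one₀ hθ.2 (abs_nonneg _) (hf ω)
    linarith [(abs_le.1 (Real.abs_exp_sub_one_sub_id_le hle)).2, mul_pow θ (f ω) 2]
  calc 𝔼 ω, Real.exp (θ * (f ω - 𝔼 ω', f ω'))
      = Real.exp (-(θ * 𝔼 ω, f ω)) * 𝔼 ω, Real.exp (θ * f ω) := by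
        rw [mul_expect]
        refine expect_congr rfl fun ω _ => ?_
        rw [← Real.exp_add]
        ring_nf
    _ ≤ Real.exp (-(θ * 𝔼 ω, f ω)) * 𝔼 ω, (1 + θ * f ω + θ ^ 2 * f ω ^ 2) := by
        gcongr
        exact hpoint _
    _ = Real.exp (-(θ * 𝔼 ω, f ω)) * (θ * 𝔼 ω, f ω + θ ^ 2 * 𝔼 ω, f ω ^ 2 + 1) := by
        rw [expect_add_distrib, expect_add_distrib, Fintype.expect_one, mul_expect, mul_expect]
        ring
    _ ≤ Real.exp (-(θ * 𝔼 ω, f ω)) * Real.exp (θ * 𝔼 ω, f ω + θ ^ 2 * 𝔼 ω, f ω ^ 2) := by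
        gcongr
        exact Real.add_one_le_exp _
    _ = Real.exp (θ ^ 2 * 𝔼 ω, f ω ^ 2) := by
        rw [← Real.exp_add]
        ring_nf

theorem bernsteinRadius_mul (v W : ℝ) {r : ℝ} (hr : 0 ≤ r) :
    bernsteinRadius (r * v) (r * W) = r * bernsteinRadius v W := by
  rw [bernsteinRadius, bernsteinRadius, show r * v * (r * W) = r ^ 2 * (v * W) by ring,
    Real.sqrt_mul (sq_nonneg r), Real.sqrt_sq hr]
  ring

end Bernstein

section Splits

variable {V : Type*} {C D A B : Finset V}

/-- The size of the smaller of the two parts into which `A` splits `C`. -/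
noncomputable def splitSize (C A : Finset V) : ℕ := min #A #(C \ A)

theorem splitSize_self (C : Finset V) : splitSize C C = 0 := by
  simp [splitSize]

theorem sum_powerset_pow_splitSize_le (C : Finset V) {x : ℝ} (hx : 0 ≤ x) (hCx : #C * x ≤ 1) :
    ∑ A ∈ C.powerset, x ^ splitSize C A ≤ 6 := by
  have hmin : ∀ A ∈ C.powerset, x ^ splitSize C A ≤
      x ^ #A * 1 ^ (#C - #A) + 1 ^ #A * x ^ (#C - #A) := by
    intro A hA
    rw [splitSize, card_sdiff_of_subset (mem_powerset.1 hA), one_pow, one_pow, mul_one, one_mul]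
    rcases min_choice #A (#C - #A) with h | h <;> rw [h]
    · exact le_add_of_nonneg_right (by positivity)
    · exact le_add_of_nonneg_left (by positivity)
  have hpow : (x + 1) ^ #C ≤ 3 :=
    calc (x + 1) ^ #C ≤ Real.exp x ^ #C := by
          gcongr
          exact Real.add_one_le_exp x
      _ = Real.exp (#C * x) := (Real.exp_nat_mul _ _).symm
      _ ≤ Real.exp 1 := Real.exp_le_exp.2 hCx
      _ ≤ 3 := Real.exp_one_lt_three.le
  calc ∑ A ∈ C.powerset, x ^ splitSize C A
      ≤ ∑ A ∈ C.powerset, (x ^ #A * 1 ^ (#C - #A) + 1 ^ #A * x ^ (#C - #A)) := sum_le_sum hmin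
    _ = (x + 1) ^ #C + (1 + x) ^ #C := by
        rw [sum_add_distrib, sum_pow_mul_eq_add_pow, sum_pow_mul_eq_add_pow]
    _ ≤ 6 := by linarith [add_comm x 1 ▸ hpow]

/-- For `A ⊆ C` and `B ⊆ D` coming from one cluster of a second clustering, a proxy for the
number of pairs inside `C ∪ D` on which the two clusterings disagree: the pairs in `A × B` and the
pairs separated by the splits of `C` and of `D`. -/
noncomputable def blockWeight (C D A B : Finset V) : ℝ :=
  #A * #B + #A * #(C \ A) + #B * #(D \ B)

theorem blockWeight_nonneg (C D A B : Finset V) : 0 ≤ blockWeight C D A B := by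
  unfold blockWeight
  positivity

/-- The factor, up to normalization, by which the exponent in the tail bound for the rectangle
`A × B` has to exceed that of a single event in order to survive the union bound over all
`A ⊆ C` and `B ⊆ D`: at most `2 * n ^ s` subsets of a set of `n` points have split size `s`. -/
noncomputable def unionScale (C D A B : Finset V) : ℝ :=
  #D * (splitSize C A + splitSize D B + 1)

theorem unionScale_nonneg (C D A B : Finset V) : 0 ≤ unionScale C D A B := by
  unfold unionScale
  positivity

theorem cast_splitSize_le_card (C A : Finset V) : (splitSize C A : ℝ) ≤ #A :=
  Nat.cast_le.2 (min_le_left _ _)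

theorem cast_splitSize_le_card_sdiff (C A : Finset V) : (splitSize C A : ℝ) ≤ #(C \ A) :=
  Nat.cast_le.2 (min_le_right _ _)

theorem cast_card_eq_card_sdiff_add (hA : A ⊆ C) : (#C : ℝ) = #(C \ A) + #A := by
  exact_mod_cast (card_sdiff_add_card_eq_card hA).symm

theorem card_mul_splitSize_le (hA : A ⊆ C) :
    (#C : ℝ) * splitSize C A ≤ 2 * (#A * #(C \ A)) := by
  have h₁ := mul_le_mul_of_nonneg_left (cast_splitSize_le_card C A) (Nat.cast_nonneg #(C \ A))
  have h₂ := mul_le_mul_of_nonneg_left (cast_splitSize_le_card_sdiff C A) (Nat.cast_nonneg #A)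
  rw [cast_card_eq_card_sdiff_add hA]
  linarith

theorem card_mul_card_le (hB : B ⊆ D) (hsmall : #B ≤ #(D \ B)) :
    (#D : ℝ) * #B ≤ 2 * (#B * #(D \ B)) := by
  have h := card_mul_splitSize_le hB
  rwa [splitSize, min_eq_left hsmall] at h

theorem card_mul_splitSize_add_one_le (hB : B ⊆ D) (hB₀ : B.Nonempty) (hsmall : #B ≤ #(D \ B)) :
    (#D : ℝ) * (splitSize D B + 1) ≤ 4 * (#B * #(D \ B)) := by
  have hone : (1 : ℝ) ≤ #B := Nat.one_le_cast.2 hB₀.card_pos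
  calc (#D : ℝ) * (splitSize D B + 1) ≤ #D * (#B + #B) := by
        gcongr
        exact min_le_left _ _
    _ ≤ 4 * (#B * #(D \ B)) := by linarith [card_mul_card_le hB hsmall]

theorem unionScale_le_of_card_sdiff_le (hA₀ : A.Nonempty) (hB : B ⊆ D)
    (hlarge : #(D \ B) ≤ #B) : unionScale C D A B ≤ 4 * blockWeight C D A B := by
  have hone : (1 : ℝ) ≤ #A := Nat.one_le_cast.2 hA₀.card_pos
  have hD : (#D : ℝ) ≤ 2 * #B := by
    rw [cast_card_eq_card_sdiff_add hB]
    linarith [(Nat.cast_le (α := ℝ)).2 hlarge]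
  have hA_split : (splitSize C A : ℝ) + 1 ≤ 2 * #A := by linarith [cast_splitSize_le_card C A]
  calc unionScale C D A B ≤ 2 * #B * (#(D \ B) + 2 * #A) := by
        rw [unionScale]
        exact mul_le_mul hD (by linarith [cast_splitSize_le_card_sdiff D B]) (by positivity)
          (by positivity)
    _ ≤ 4 * blockWeight C D A B := by
        have h₁ : (0 : ℝ) ≤ #A * #(C \ A) := by positivity
        have h₂ : (0 : ℝ) ≤ #B * #(D \ B) := by positivity
        rw [blockWeight]
        linarith

theorem card_mul_card_mul_unionScale_le (hB : B ⊆ D) (hB₀ : B.Nonempty)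
    (hsmall : #B ≤ #(D \ B)) :
    #A * #B * unionScale C D A B ≤ 4 * blockWeight C D A B ^ 2 := by
  set X : ℝ := #A * #B with hX
  set Y : ℝ := #A * #(C \ A) with hY
  set Z : ℝ := #B * #(D \ B) with hZ
  have hAY : (#A : ℝ) * splitSize C A ≤ Y :=
    mul_le_mul_of_nonneg_left (cast_splitSize_le_card_sdiff C A) (Nat.cast_nonneg _)
  have hYZ : (#A * splitSize C A : ℝ) * (#D * #B) ≤ Y * (2 * Z) :=
    mul_le_mul hAY (card_mul_card_le hB hsmall) (by positivity) (by positivity)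
  have hXZ : X * (#D * (splitSize D B + 1)) ≤ X * (4 * Z) :=
    mul_le_mul_of_nonneg_left (card_mul_splitSize_add_one_le hB hB₀ hsmall) (by positivity)
  calc X * unionScale C D A B
      = #A * splitSize C A * (#D * #B) + X * (#D * (splitSize D B + 1)) := by
        rw [unionScale]
        ring
    _ ≤ Y * (2 * Z) + X * (4 * Z) := add_le_add hYZ hXZ
    _ ≤ 4 * (X + Y + Z) ^ 2 := by
        have : 0 ≤ X * Y := by positivity
        have : 0 ≤ X * Z := by positivity
        have : 0 ≤ Y * Z := by positivity
        linarith [sq_nonneg X, sq_nonneg Y, sq_nonneg Z,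
          show (X + Y + Z) ^ 2 = X ^ 2 + Y ^ 2 + Z ^ 2 + 2 * (X * Y + X * Z + Y * Z) by ring]

theorem mul_unionScale_le {δ : ℝ} (hδ : δ ≤ 1) (hA : A ⊆ C) (hB : B ⊆ D) (hB₀ : B.Nonempty)
    (hsmall : #B ≤ #(D \ B)) (hCD : δ * #D ≤ 8 * #C) :
    δ * unionScale C D A B ≤ 16 * blockWeight C D A B := by
  have hX : (0 : ℝ) ≤ #A * #B := by positivity
  have hZ : (0 : ℝ) ≤ #B * #(D \ B) := by positivity
  calc δ * unionScale C D A B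
      = δ * #D * splitSize C A + δ * (#D * (splitSize D B + 1)) := by
        rw [unionScale]
        ring
    _ ≤ 8 * #C * splitSize C A + 1 * (#D * (splitSize D B + 1)) := by gcongr
    _ ≤ 16 * blockWeight C D A B := by
        rw [blockWeight]
        linarith [card_mul_splitSize_le hA, card_mul_splitSize_add_one_le hB hB₀ hsmall]

theorem bernsteinRadius_le {δ η v t S : ℝ} (hδ : 0 ≤ δ) (hη : η ≤ (δ / 16) ^ 2) (hv : 0 ≤ v)
    (ht : 0 ≤ t) (hS : 0 ≤ S) (hvt : v * t ≤ 4 * S ^ 2) (hδt : δ * t ≤ 16 * S) :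
    bernsteinRadius v (η * t) ≤ δ / 2 * S := by
  have hsqrt : √(v * (η * t)) ≤ δ / 8 * S := by
    refine Real.sqrt_le_iff.2 ⟨by positivity, ?_⟩
    calc v * (η * t) = η * (v * t) := by ring
      _ ≤ (δ / 16) ^ 2 * (4 * S ^ 2) := mul_le_mul hη hvt (by positivity) (by positivity)
      _ = (δ / 8 * S) ^ 2 := by ring
  have hlinear : η * t ≤ δ / 16 * S :=
    calc η * t ≤ (δ / 16) ^ 2 * t := by gcongr
      _ = δ / 256 * (δ * t) := by ring
      _ ≤ δ / 256 * (16 * S) := by gcongr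
      _ = δ / 16 * S := by ring
  rw [bernsteinRadius]
  linarith [mul_nonneg hδ hS]

theorem bernsteinRadius_unionScale_le {δ η : ℝ} (hδ₀ : 0 ≤ δ) (hδ₁ : δ ≤ 1)
    (hη : η ≤ (δ / 16) ^ 2) (hA : A ⊆ C) (hB : B ⊆ D) (hA₀ : A.Nonempty) (hB₀ : B.Nonempty)
    (hCD : #(D \ B) < #B ∨ δ * #D ≤ 8 * #C) :
    bernsteinRadius (#A * #B) (η * unionScale C D A B) ≤ δ * blockWeight C D A B := by
  set S := blockWeight C D A B with hS_def
  have hS : 0 ≤ S := blockWeight_nonneg C D A B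
  have ht := unionScale_nonneg C D A B
  have hX : (#A : ℝ) * #B ≤ S := by
    rw [hS_def, blockWeight, add_assoc]
    exact le_add_of_nonneg_right (by positivity)
  suffices hscale : #A * #B * unionScale C D A B ≤ 4 * S ^ 2 ∧
      δ * unionScale C D A B ≤ 16 * S from
    (bernsteinRadius_le hδ₀ hη (by positivity) ht hS hscale.1 hscale.2).trans
      (by linarith [mul_nonneg hδ₀ hS])
  rcases lt_or_ge #(D \ B) #B with hlarge | hsmall
  · have hscale : unionScale C D A B ≤ 4 * S := unionScale_le_of_card_sdiff_le hA₀ hB hlarge.le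
    constructor
    · calc #A * #B * unionScale C D A B ≤ S * (4 * S) := by gcongr
        _ = 4 * S ^ 2 := by ring
    · calc δ * unionScale C D A B ≤ 1 * (4 * S) := by gcongr
        _ ≤ 16 * S := by linarith
  · exact ⟨card_mul_card_mul_unionScale_le hB hB₀ hsmall,
      mul_unionScale_le hδ₁ hA hB hB₀ hsmall (hCD.resolve_left hsmall.not_gt)⟩

theorem bernsteinRadius_unionScale_self_add_le {δ η : ℝ} (hδ₀ : 0 ≤ δ) (hδ₁ : δ ≤ 1)
    (hη : η ≤ (δ / 16) ^ 2) (hB : B ⊆ D) (hB₀ : B.Nonempty) (hsmall : #B ≤ #(D \ B))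
    (hCD : 8 * #C ≤ δ * #D) :
    bernsteinRadius (#C * #B) (η * unionScale C D C B) + 2 * (#C * #B) ≤
      δ * blockWeight C D A B := by
  set Z : ℝ := #B * #(D \ B) with hZ_def
  have hZ : 0 ≤ Z := by positivity
  have hCB : (#C : ℝ) * #B ≤ δ / 4 * Z :=
    calc (#C : ℝ) * #B = 8 * #C * #B / 8 := by ring
      _ ≤ δ * #D * #B / 8 := by gcongr
      _ = δ / 8 * (#D * #B) := by ring
      _ ≤ δ / 8 * (2 * Z) := mul_le_mul_of_nonneg_left (card_mul_card_le hB hsmall) (by positivity)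
      _ = δ / 4 * Z := by ring
  have hscale : unionScale C D C B ≤ 4 * Z := by
    rw [unionScale, splitSize_self, Nat.cast_zero, zero_add]
    exact card_mul_splitSize_add_one_le hB hB₀ hsmall
  have ht := unionScale_nonneg C D C B
  have hradius : bernsteinRadius (#C * #B) (η * unionScale C D C B) ≤ δ / 2 * Z := by
    refine bernsteinRadius_le hδ₀ hη (by positivity) ht hZ ?_ ?_
    · calc #C * #B * unionScale C D C B ≤ 1 / 4 * Z * (4 * Z) :=
            mul_le_mul (hCB.trans (by gcongr)) hscale ht (by positivity)
        _ ≤ 4 * Z ^ 2 := by linarith [sq_nonneg Z, sq Z]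
    · calc δ * unionScale C D C B ≤ 1 * (4 * Z) := by gcongr
        _ ≤ 16 * Z := by linarith
  calc bernsteinRadius (#C * #B) (η * unionScale C D C B) + 2 * (#C * #B)
      ≤ δ / 2 * Z + 2 * (δ / 4 * Z) := by gcongr
    _ = δ * Z := by ring
    _ ≤ δ * blockWeight C D A B := by
        rw [blockWeight]
        gcongr
        exact le_add_of_nonneg_left (by positivity)

end Splits

section Weights

variable {V : Type*}

/-- The weight `w` with all pairs whose second point lies outside `B` removed. -/
noncomputable def restrictRight (B : Finset V) (w : V → V → ℝ) (u : V) : V → ℝ :=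
  (B : Set V).indicator (w u)

theorem abs_restrictRight_le (B : Finset V) {w : V → V → ℝ} (hw : ∀ u v, |w u v| ≤ 1) (u v : V) :
    |restrictRight B w u v| ≤ restrictRight B 1 u v := by
  by_cases hv : v ∈ B <;> simp [restrictRight, hv, hw u v]

theorem sum_restrictRight {B C : Finset V} (hB : B ⊆ C) (w : V → V → ℝ) (u : V) :
    ∑ v ∈ C, restrictRight B w u v = ∑ v ∈ B, w u v :=
  sum_indicator_subset _ hB

theorem sum_sum_restrictRight_one {B C : Finset V} (hB : B ⊆ C) (A : Finset V) :
    ∑ u ∈ A, ∑ v ∈ C, restrictRight B 1 u v = #A * #B := by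
  simp [sum_restrictRight hB]

theorem sum_sum_sq_restrictRight_le {B C : Finset V} (hB : B ⊆ C) {w : V → V → ℝ}
    (hw : ∀ u v, |w u v| ≤ 1) (A : Finset V) :
    ∑ u ∈ A, ∑ v ∈ C, restrictRight B w u v ^ 2 ≤ #A * #B := by
  rw [← sum_sum_restrictRight_one hB]
  refine sum_le_sum fun u _ => sum_le_sum fun v _ => ?_
  by_cases hv : v ∈ B
  · simpa [restrictRight, hv] using hw u v
  · simp [restrictRight, hv]

theorem restrictRight_neg (B : Finset V) (w : V → V → ℝ) :
    restrictRight B (-w) = -restrictRight B w :=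
  funext fun u => Set.indicator_neg' (B : Set V) (w u)

theorem abs_sum_sum_le_sum_sum {α β : Type*} {A C : Finset α} (hA : A ⊆ C) (s : Finset β)
    {f g : α → β → ℝ} (hfg : ∀ a b, |f a b| ≤ g a b) :
    |∑ a ∈ A, ∑ b ∈ s, f a b| ≤ ∑ a ∈ C, ∑ b ∈ s, g a b :=
  calc |∑ a ∈ A, ∑ b ∈ s, f a b| ≤ ∑ a ∈ A, ∑ b ∈ s, g a b :=
        (abs_sum_le_sum_abs _ _).trans <| sum_le_sum fun a _ =>
          (abs_sum_le_sum_abs _ _).trans <| sum_le_sum fun b _ => hfg a b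
    _ ≤ ∑ a ∈ C, ∑ b ∈ s, g a b := sum_le_sum_of_subset_of_nonneg hA fun a _ _ =>
        sum_nonneg fun b _ => (abs_nonneg _).trans (hfg a b)

end Weights

section Sampling

variable {V : Type*} [Fintype V] {k q : ℕ} {Cl : V → Fin k}

/-- The space of sample tables: `ω u j s` is the `s`-th of the `q` points of the cluster `C_j`
drawn for `u`. Samples for `j` smaller than the cluster index of `u` are included although the
estimator never reads them. -/
abbrev Samples (Cl : V → Fin k) (q : ℕ) :=
  ∀ _u : V, ∀ j : Fin k, Fin q → {v : V // Cl v = j}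

theorem mem_cluster {j : Fin k} {v : V} : v ∈ cluster Cl j ↔ Cl v = j :=
  mem_filter_univ v

theorem cluster_nonempty (hCl : Function.Surjective Cl) (j : Fin k) : (cluster Cl j).Nonempty :=
  (hCl j).imp fun _ => mem_cluster.2

theorem expect_subtype_eq_sum_cluster_div_card (Cl : V → Fin k) (j : Fin k) (f : V → ℝ) :
    𝔼 x : {v // Cl v = j}, f x = (∑ v ∈ cluster Cl j, f v) / #(cluster Cl j) := by
  rw [Fintype.expect_eq_sum_div_card, sum_subtype (cluster Cl j) (fun _ => mem_cluster) f,
    Fintype.card_of_subtype (cluster Cl j) fun _ => mem_cluster]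

/-- The deviation of the sampled estimate of `∑ u ∈ A, ∑ v ∈ C_j, w u v` from its true value. -/
noncomputable def sampleError (j : Fin k) (A : Finset V) (w : V → V → ℝ) (ω : Samples Cl q) : ℝ :=
  #(cluster Cl j) / q * ∑ u ∈ A, ∑ s, w u (ω u j s) - ∑ u ∈ A, ∑ v ∈ cluster Cl j, w u v

theorem sampleError_neg (j : Fin k) (A : Finset V) (w : V → V → ℝ) (ω : Samples Cl q) :
    sampleError j A (-w) ω = -sampleError j A w ω := by
  simp only [sampleError, Pi.neg_apply, sum_neg_distrib]
  ring

theorem hasBernsteinMGF_sampleError {j : Fin k} (hj : (cluster Cl j).Nonempty) (hq : 0 < q)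
    {w : V → V → ℝ} (hw : ∀ u v, |w u v| ≤ 1) (A : Finset V) :
    HasBernsteinMGF (fun ω : Samples Cl q => q / #(cluster Cl j) * sampleError j A w ω)
      (q / #(cluster Cl j) * ∑ u ∈ A, ∑ v ∈ cluster Cl j, w u v ^ 2) := by
  have hN : (#(cluster Cl j) : ℝ) ≠ 0 := Nat.cast_ne_zero.2 hj.card_ne_zero
  have hq' : (q : ℝ) ≠ 0 := Nat.cast_ne_zero.2 hq.ne'
  obtain ⟨v₀, hv₀⟩ := hj
  have : Nonempty {v // Cl v = j} := ⟨v₀, mem_cluster.1 hv₀⟩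
  have hpi := HasBernsteinMGF.pi_sum A fun u _ =>
    (HasBernsteinMGF.pi_sum (univ : Finset (Fin q)) fun _ _ =>
      hasBernsteinMGF_sub_expect fun x : {v // Cl v = j} => hw u x).comp_eval
        (α := fun j : Fin k => Fin q → {v // Cl v = j})
  convert hpi using 1
  · funext ω
    simp only [fun u => expect_subtype_eq_sum_cluster_div_card Cl j (w u), sum_sub_distrib,
      sum_const, card_univ, Fintype.card_fin, nsmul_eq_mul, ← mul_sum, ← sum_div, sampleError]
    field_simp
  · simp only [fun u => expect_subtype_eq_sum_cluster_div_card Cl j fun v => w u v ^ 2, sum_const,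
      card_univ, Fintype.card_fin, nsmul_eq_mul, ← mul_sum, ← sum_div]
    ring

theorem prob_bernsteinRadius_lt_sampleError_le {j : Fin k} (hj : (cluster Cl j).Nonempty)
    (hq : 0 < q) {w : V → V → ℝ} (hw : ∀ u v, |w u v| ≤ 1) (A : Finset V) {B : Finset V}
    (hB : B ⊆ cluster Cl j) {W : ℝ} (hW : 0 ≤ W) :
    prob (fun ω : Samples Cl q =>
        bernsteinRadius (#A * #B) W < sampleError j A (restrictRight B w) ω) ≤
      Real.exp (-(q / #(cluster Cl j) * W)) := by
  have hN : (0 : ℝ) < #(cluster Cl j) := Nat.cast_pos.2 hj.card_pos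
  have hr : (0 : ℝ) < q / #(cluster Cl j) := div_pos (Nat.cast_pos.2 hq) hN
  have hw_restrict : ∀ u v, |restrictRight B w u v| ≤ 1 := fun u v =>
    (abs_restrictRight_le B hw u v).trans (Set.indicator_le_self' (fun _ _ => zero_le_one) v)
  have htail := ((hasBernsteinMGF_sampleError hj hq hw_restrict A).mono
    (mul_le_mul_of_nonneg_left (sum_sum_sq_restrictRight_le hB hw A) hr.le)).prob_lt_le
    (mul_nonneg hr.le hW)
  simpa only [bernsteinRadius_mul _ _ hr.le, mul_lt_mul_iff_right₀ hr] using htail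

/-- Every rectangle `A × B` inside a product of two clusters is sampled, with weight `w`, up to a
one-sided Bernstein error at the scale that the union bound over all rectangles requires. -/
def Concentrated (η : ℝ) (w : V → V → ℝ) (ω : Samples Cl q) : Prop :=
  ∀ i j, ∀ A ⊆ cluster Cl i, ∀ B ⊆ cluster Cl j,
    sampleError j A (restrictRight B w) ω ≤
      bernsteinRadius (#A * #B) (η * unionScale (cluster Cl i) (cluster Cl j) A B)

theorem prob_exists_rectangle_le {i j : Fin k} (hj : (cluster Cl j).Nonempty) (hq : 0 < q)
    {w : V → V → ℝ} (hw : ∀ u v, |w u v| ≤ 1) {η : ℝ} (hη : 0 ≤ η)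
    (hcard : Fintype.card V * Real.exp (-(η * q)) ≤ 1) :
    prob (fun ω : Samples Cl q =>
        ∃ p ∈ (cluster Cl i).powerset ×ˢ (cluster Cl j).powerset,
          bernsteinRadius (#p.1 * #p.2) (η * unionScale (cluster Cl i) (cluster Cl j) p.1 p.2) <
            sampleError j p.1 (restrictRight p.2 w) ω) ≤
      36 * Real.exp (-(η * q)) := by
  set x := Real.exp (-(η * q)) with hx
  have hx₀ : 0 ≤ x := (Real.exp_pos _).le
  have hsum : ∀ l, ∑ A ∈ (cluster Cl l).powerset, x ^ splitSize (cluster Cl l) A ≤ 6 := fun l =>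
    sum_powerset_pow_splitSize_le _ hx₀ <|
      (mul_le_mul_of_nonneg_right (Nat.cast_le.2 (card_le_univ _)) hx₀).trans hcard
  have hN : (#(cluster Cl j) : ℝ) ≠ 0 := Nat.cast_ne_zero.2 hj.card_ne_zero
  have htail : ∀ p ∈ (cluster Cl i).powerset ×ˢ (cluster Cl j).powerset,
      prob (fun ω : Samples Cl q =>
          bernsteinRadius (#p.1 * #p.2) (η * unionScale (cluster Cl i) (cluster Cl j) p.1 p.2) <
            sampleError j p.1 (restrictRight p.2 w) ω) ≤
        x ^ splitSize (cluster Cl i) p.1 * x ^ splitSize (cluster Cl j) p.2 * x := by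
    intro p hp
    refine (prob_bernsteinRadius_lt_sampleError_le hj hq hw p.1
      (mem_powerset.1 (mem_product.1 hp).2) (mul_nonneg hη (unionScale_nonneg _ _ _ _))).trans_eq ?_
    rw [← pow_add, ← pow_succ, hx, ← Real.exp_nat_mul, unionScale]
    congr 1
    push_cast
    field_simp
  refine (prob_exists_mem_le _ _).trans ((sum_le_sum htail).trans ?_)
  simp only [← sum_mul, sum_product, ← sum_mul_sum]
  have := mul_le_mul (hsum i) (hsum j) (by positivity) (by norm_num)
  gcongr
  linarith

theorem prob_not_concentrated_le (hCl : Function.Surjective Cl) (hq : 0 < q)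
    {w : V → V → ℝ} (hw : ∀ u v, |w u v| ≤ 1) {η : ℝ} (hη : 0 ≤ η)
    (hcard : Fintype.card V * Real.exp (-(η * q)) ≤ 1) :
    prob (fun ω : Samples Cl q => ¬ Concentrated η w ω) ≤ 36 * k ^ 2 * Real.exp (-(η * q)) := by
  calc prob (fun ω : Samples Cl q => ¬ Concentrated η w ω)
      ≤ prob (fun ω : Samples Cl q => ∃ ij ∈ (univ : Finset (Fin k × Fin k)),
          ∃ p ∈ (cluster Cl ij.1).powerset ×ˢ (cluster Cl ij.2).powerset,
            bernsteinRadius (#p.1 * #p.2)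
                (η * unionScale (cluster Cl ij.1) (cluster Cl ij.2) p.1 p.2) <
              sampleError ij.2 p.1 (restrictRight p.2 w) ω) := by
        refine prob_mono fun ω hω => ?_
        contrapose! hω
        exact fun i j A hA B hB => hω (i, j) (mem_univ _) (A, B)
          (mem_product.2 ⟨mem_powerset.2 hA, mem_powerset.2 hB⟩)
    _ ≤ ∑ _ij : Fin k × Fin k, 36 * Real.exp (-(η * q)) :=
        (prob_exists_mem_le _ _).trans <| sum_le_sum fun ij _ =>
          prob_exists_rectangle_le (cluster_nonempty hCl ij.2) hq hw hη hcard
    _ = 36 * k ^ 2 * Real.exp (-(η * q)) := by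
        simp only [sum_const, card_univ, Fintype.card_prod, Fintype.card_fin, nsmul_eq_mul,
          Nat.cast_mul]
        ring

theorem one_sub_le_prob_forall_concentrated (hCl : Function.Surjective Cl) (hq : 0 < q)
    {H : Finset (V → V → ℝ)} (hH : ∀ w ∈ H, ∀ u v, |w u v| ≤ 1) {η : ℝ} (hη : 0 ≤ η)
    (hcard : Fintype.card V * Real.exp (-(η * q)) ≤ 1) :
    1 - #H * (36 * k ^ 2 * Real.exp (-(η * q))) ≤
      prob (fun ω : Samples Cl q => ∀ w ∈ H, Concentrated η w ω) := by
  have : Nonempty (Samples Cl q) := ⟨fun _ j _ => ⟨_, (hCl j).choose_spec⟩⟩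
  have hbad : prob (fun ω : Samples Cl q => ¬ ∀ w ∈ H, Concentrated η w ω) ≤
      #H * (36 * k ^ 2 * Real.exp (-(η * q))) :=
    calc prob (fun ω : Samples Cl q => ¬ ∀ w ∈ H, Concentrated η w ω)
        ≤ ∑ w ∈ H, prob (fun ω : Samples Cl q => ¬ Concentrated η w ω) := by
          simpa only [not_forall, exists_prop] using
            prob_exists_mem_le H fun w (ω : Samples Cl q) => ¬ Concentrated η w ω
      _ ≤ #H * (36 * k ^ 2 * Real.exp (-(η * q))) := by
          rw [← nsmul_eq_mul]
          exact sum_le_card_nsmul _ _ _ fun w hw =>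
            prob_not_concentrated_le hCl hq (hH w hw) hη hcard
  linarith [prob_not fun ω : Samples Cl q => ∀ w ∈ H, Concentrated η w ω]

theorem abs_sampleError_le_sampleError_add {w w' : V → V → ℝ} (hw : ∀ u v, |w u v| ≤ w' u v)
    {A C : Finset V} (hA : A ⊆ C) (j : Fin k) (ω : Samples Cl q) :
    |sampleError j A w ω| ≤ sampleError j C w' ω + 2 * ∑ u ∈ C, ∑ v ∈ cluster Cl j, w' u v := by
  have hscale : (0 : ℝ) ≤ #(cluster Cl j) / q := by positivity
  have hsampled := mul_le_mul_of_nonneg_left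
    (abs_sum_sum_le_sum_sum hA univ fun u s => hw u (ω u j s)) hscale
  have hexact := abs_sum_sum_le_sum_sum hA (cluster Cl j) hw
  calc |sampleError j A w ω|
      ≤ #(cluster Cl j) / q * |∑ u ∈ A, ∑ s, w u (ω u j s)| +
          |∑ u ∈ A, ∑ v ∈ cluster Cl j, w u v| := by
        rw [sampleError, ← abs_of_nonneg hscale, ← abs_mul, abs_of_nonneg hscale]
        exact abs_sub _ _
    _ ≤ sampleError j C w' ω + 2 * ∑ u ∈ C, ∑ v ∈ cluster Cl j, w' u v := by
        rw [sampleError]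
        linarith

theorem abs_sampleError_restrictRight_le {η δ : ℝ} (hδ₀ : 0 ≤ δ) (hδ₁ : δ ≤ 1)
    (hη : η ≤ (δ / 16) ^ 2) {w : V → V → ℝ} (hw : ∀ u v, |w u v| ≤ 1) {ω : Samples Cl q}
    (hpos : Concentrated η w ω) (hneg : Concentrated η (-w) ω) (hone : Concentrated η 1 ω)
    {i j : Fin k} {A B : Finset V} (hA : A ⊆ cluster Cl i) (hB : B ⊆ cluster Cl j) :
    |sampleError j A (restrictRight B w) ω| ≤
      δ * blockWeight (cluster Cl i) (cluster Cl j) A B := by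
  rcases A.eq_empty_or_nonempty with rfl | hA₀
  · simpa [sampleError] using mul_nonneg hδ₀ (blockWeight_nonneg _ _ ∅ B)
  rcases B.eq_empty_or_nonempty with rfl | hB₀
  · simpa [sampleError, restrictRight] using mul_nonneg hδ₀ (blockWeight_nonneg _ _ A ∅)
  by_cases hCD : #(cluster Cl j \ B) < #B ∨ δ * #(cluster Cl j) ≤ 8 * #(cluster Cl i)
  · have hradius := bernsteinRadius_unionScale_le hδ₀ hδ₁ hη hA hB hA₀ hB₀ hCD
    refine abs_le'.2 ⟨(hpos i j A hA B hB).trans hradius, ?_⟩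
    rw [← sampleError_neg, ← restrictRight_neg]
    exact (hneg i j A hA B hB).trans hradius
  · rw [not_or, not_lt, not_le] at hCD
    calc |sampleError j A (restrictRight B w) ω|
        ≤ sampleError j (cluster Cl i) (restrictRight B 1) ω + 2 * (#(cluster Cl i) * #B) := by
          rw [← sum_sum_restrictRight_one hB]
          exact abs_sampleError_le_sampleError_add (abs_restrictRight_le B hw) hA j ω
      _ ≤ bernsteinRadius (#(cluster Cl i) * #B)
            (η * unionScale (cluster Cl i) (cluster Cl j) (cluster Cl i) B) +
          2 * (#(cluster Cl i) * #B) := by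
          gcongr
          exact hone i j _ Subset.rfl B hB
      _ ≤ δ * blockWeight (cluster Cl i) (cluster Cl j) A B :=
          bernsteinRadius_unionScale_self_add_le hδ₀ hδ₁ hη hB hB₀ hCD.1 hCD.2.le

end Sampling

section Clusterings

variable {V : Type*} {k : ℕ}

/-- The two clusterings disagree on whether `u` and `v` belong together. -/
def Disagree (Cl Cl' : V → Fin k) (u v : V) : Prop := ¬ (Cl u = Cl v ↔ Cl' u = Cl' v)

/-- The change of the cost of the pair `u, v` when passing from `Cl` to a clustering that disagrees
with `Cl` on this pair. -/
noncomputable def pairSign (G : SimpleGraph V) (Cl : V → Fin k) (u v : V) : ℝ :=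
  if G.Adj u v ↔ Cl u = Cl v then 1 else -1

theorem abs_pairSign_le_one (G : SimpleGraph V) (Cl : V → Fin k) (u v : V) :
    |pairSign G Cl u v| ≤ 1 := by
  unfold pairSign
  split_ifs <;> simp

theorem fuv_eq_ite_disagree (G : SimpleGraph V) (Cl Cl' : V → Fin k) (u v : V) :
    fuv G Cl Cl' u v = if Disagree Cl Cl' u v then pairSign G Cl u v else 0 := by
  by_cases hG : G.Adj u v <;> by_cases hCl : Cl u = Cl v <;> by_cases hCl' : Cl' u = Cl' v <;>
    simp [fuv, costuv, pairSign, Disagree, hG, hCl, hCl']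

theorem fuv_self (G : SimpleGraph V) (Cl Cl' : V → Fin k) (u : V) : fuv G Cl Cl' u u = 0 := by
  simp [fuv, costuv]

theorem fuv_comm (G : SimpleGraph V) (Cl Cl' : V → Fin k) (u v : V) :
    fuv G Cl Cl' u v = fuv G Cl Cl' v u := by
  simp only [fuv, costuv, G.adj_comm u v, eq_comm (a := Cl u), eq_comm (a := Cl' u)]

variable [Fintype V]

theorem sum_sum_cluster (Cl : V → Fin k) (f : V → V → ℝ) :
    ∑ i, ∑ j, ∑ u ∈ cluster Cl i, ∑ v ∈ cluster Cl j, f u v = ∑ u, ∑ v, f u v := by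
  simp only [cluster]
  rw [← sum_fiberwise univ Cl]
  refine sum_congr rfl fun i _ => ?_
  rw [sum_comm]
  exact sum_congr rfl fun u _ => sum_fiberwise univ Cl _

/-- The intersection of the `i`-th cluster of `Cl` with the `l`-th cluster of `Cl'`. -/
noncomputable def part (Cl Cl' : V → Fin k) (i l : Fin k) : Finset V :=
  {v ∈ cluster Cl i | Cl' v = l}

/-- The points of the `j`-th cluster of `Cl` on which `Cl` and `Cl'` disagree when paired with a
point of `part Cl Cl' i l`. -/
noncomputable def opposing (Cl Cl' : V → Fin k) (i j l : Fin k) : Finset V :=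
  {v ∈ cluster Cl j | ¬ (i = j ↔ Cl' v = l)}

theorem part_subset (Cl Cl' : V → Fin k) (i l : Fin k) : part Cl Cl' i l ⊆ cluster Cl i :=
  filter_subset _ _

theorem opposing_subset (Cl Cl' : V → Fin k) (i j l : Fin k) :
    opposing Cl Cl' i j l ⊆ cluster Cl j :=
  filter_subset _ _

theorem opposing_self (Cl Cl' : V → Fin k) (i l : Fin k) :
    opposing Cl Cl' i i l = cluster Cl i \ part Cl Cl' i l := by
  simp [opposing, part, filter_not]

theorem opposing_of_ne (Cl Cl' : V → Fin k) {i j : Fin k} (hij : i ≠ j) (l : Fin k) :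
    opposing Cl Cl' i j l = part Cl Cl' j l := by
  simp [opposing, part, hij]

theorem sum_part (Cl Cl' : V → Fin k) (i : Fin k) (f : V → ℝ) :
    ∑ l, ∑ u ∈ part Cl Cl' i l, f u = ∑ u ∈ cluster Cl i, f u :=
  sum_fiberwise _ _ _

theorem disagree_iff_mem_opposing {Cl Cl' : V → Fin k} {i j l : Fin k} {u v : V}
    (hu : u ∈ part Cl Cl' i l) (hv : v ∈ cluster Cl j) :
    Disagree Cl Cl' u v ↔ v ∈ opposing Cl Cl' i j l := by
  obtain ⟨hu_cluster, rfl⟩ := mem_filter.1 hu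
  rw [opposing, mem_filter, Disagree, mem_cluster.1 hu_cluster, mem_cluster.1 hv,
    eq_comm (a := Cl' u)]
  exact (and_iff_right hv).symm

/-- The number of pairs in `C_i × C_j` on which the two clusterings disagree. -/
noncomputable def disagreements (Cl Cl' : V → Fin k) (i j : Fin k) : ℝ :=
  ∑ u ∈ cluster Cl i, ∑ v ∈ cluster Cl j, if Disagree Cl Cl' u v then 1 else 0

theorem disagreements_nonneg (Cl Cl' : V → Fin k) (i j : Fin k) :
    0 ≤ disagreements Cl Cl' i j :=
  sum_nonneg fun u _ => sum_nonneg fun v _ => by split_ifs <;> norm_num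

theorem sum_disagreements (Cl Cl' : V → Fin k) :
    ∑ i, ∑ j, disagreements Cl Cl' i j = 2 * dd Cl Cl' := by
  simp only [disagreements]
  rw [sum_sum_cluster, dd, ← mul_assoc, mul_one_div_cancel two_ne_zero, one_mul]
  refine sum_congr rfl fun u _ => sum_congr rfl fun v _ => ?_
  rcases eq_or_ne u v with rfl | huv
  · simp [Disagree]
  · by_cases hCl : Cl u = Cl v <;> by_cases hCl' : Cl' u = Cl' v <;>
      simp [Disagree, huv, hCl, hCl']

theorem dd_nonneg (Cl Cl' : V → Fin k) : 0 ≤ dd Cl Cl' := by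
  have hsum : 0 ≤ ∑ i, ∑ j, disagreements Cl Cl' i j :=
    sum_nonneg fun i _ => sum_nonneg fun j _ => disagreements_nonneg Cl Cl' i j
  linarith [sum_disagreements Cl Cl']

theorem sum_disagreements_self_le (Cl Cl' : V → Fin k) :
    ∑ i, disagreements Cl Cl' i i ≤ 2 * dd Cl Cl' := by
  rw [← sum_disagreements]
  exact sum_le_sum fun i _ => single_le_sum (f := fun j => disagreements Cl Cl' i j)
    (fun j _ => disagreements_nonneg Cl Cl' i j) (mem_univ i)

theorem disagreements_eq_sum_card_part_mul (Cl Cl' : V → Fin k) (i j : Fin k) :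
    disagreements Cl Cl' i j = ∑ l, (#(part Cl Cl' i l) * #(opposing Cl Cl' i j l) : ℝ) := by
  rw [disagreements, ← sum_part Cl Cl' i]
  refine sum_congr rfl fun l _ => ?_
  rw [← nsmul_eq_mul]
  refine sum_eq_card_nsmul fun u hu => ?_
  rw [sum_congr rfl fun v hv => if_congr (disagree_iff_mem_opposing hu hv) rfl rfl, sum_boole,
    filter_mem_eq_inter, inter_eq_right.2 (opposing_subset Cl Cl' i j l)]

theorem card_opposing_mul_card_sdiff (Cl Cl' : V → Fin k) (i j l : Fin k) :
    (#(opposing Cl Cl' i j l) * #(cluster Cl j \ opposing Cl Cl' i j l) : ℝ) =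
      #(part Cl Cl' j l) * #(opposing Cl Cl' j j l) := by
  rcases eq_or_ne i j with rfl | hij
  · rw [opposing_self, Finset.sdiff_sdiff_eq_self (part_subset Cl Cl' i l), mul_comm]
  · rw [opposing_of_ne Cl Cl' hij, opposing_self]

theorem sum_blockWeight_part_opposing (Cl Cl' : V → Fin k) (i j : Fin k) :
    ∑ l, blockWeight (cluster Cl i) (cluster Cl j) (part Cl Cl' i l) (opposing Cl Cl' i j l) =
      disagreements Cl Cl' i j + disagreements Cl Cl' i i + disagreements Cl Cl' j j := by
  simp only [blockWeight, card_opposing_mul_card_sdiff, ← opposing_self, sum_add_distrib,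
    disagreements_eq_sum_card_part_mul]

end Clusterings

section HalfSum

variable {ι : Type*} [Fintype ι] [LinearOrder ι]

/-- The sum of `φ` over unordered pairs of indices, the diagonal being counted with weight one
half. -/
noncomputable def halfSum (φ : ι → ι → ℝ) : ℝ :=
  1 / 2 * ∑ i, φ i i + ∑ i, ∑ j, if i < j then φ i j else 0

theorem halfSum_sub (φ ψ : ι → ι → ℝ) :
    halfSum φ - halfSum ψ = halfSum fun i j => φ i j - ψ i j := by
  have hite : ∀ i j, (if i < j then φ i j - ψ i j else 0) =
      (if i < j then φ i j else 0) - if i < j then ψ i j else 0 := fun i j => by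
    split_ifs <;> simp
  simp only [halfSum, hite, sum_sub_distrib]
  ring

theorem abs_halfSum_le (φ : ι → ι → ℝ) : |halfSum φ| ≤ ∑ i, ∑ j, |φ i j| := by
  have hterm : ∀ i j, |(if i = j then 1 / 2 * φ i i else 0) + if i < j then φ i j else 0| ≤
      |φ i j| := fun i j => by
    rcases lt_trichotomy i j with hij | rfl | hij
    · simp [hij, hij.ne]
    · simp only [if_true, lt_irrefl, if_false, add_zero, abs_mul]
      linarith [abs_nonneg (φ i i), abs_of_pos (show (0 : ℝ) < 1 / 2 by norm_num)]
    · simp [hij.ne', hij.not_gt]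
  calc |halfSum φ|
      = |∑ i, ∑ j, ((if i = j then 1 / 2 * φ i i else 0) + if i < j then φ i j else 0)| := by
        simp only [halfSum, mul_sum, sum_add_distrib, sum_ite_eq, mem_univ, if_true]
    _ ≤ ∑ i, ∑ j, |φ i j| := (abs_sum_le_sum_abs _ _).trans <| sum_le_sum fun i _ =>
        (abs_sum_le_sum_abs _ _).trans <| sum_le_sum fun j _ => hterm i j

theorem sum_sum_eq_two_mul_halfSum {φ : ι → ι → ℝ} (hφ : ∀ i j, φ i j = φ j i) :
    ∑ i, ∑ j, φ i j = 2 * halfSum φ := by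
  have hterm : ∀ i j, φ i j = (if i = j then φ i i else 0) + (if i < j then φ i j else 0) +
      if j < i then φ j i else 0 := fun i j => by
    rcases lt_trichotomy i j with hij | rfl | hij
    · simp [hij, hij.ne, hij.not_gt]
    · simp
    · simp [hij, hij.ne', hij.not_gt, hφ i j]
  have hswap : ∑ i, ∑ j, (if j < i then φ j i else 0) = ∑ i, ∑ j, if i < j then φ i j else 0 :=
    sum_comm
  rw [sum_congr rfl fun i _ => sum_congr rfl fun j _ => hterm i j]
  simp only [halfSum, sum_add_distrib, hswap, sum_ite_eq, mem_univ, if_true]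
  ring

end HalfSum

section Regret

variable {V : Type*} [Fintype V] {k q : ℕ} {Cl : V → Fin k}

/-- The estimator `f̂(C')` of the regret `cost(C') - cost(C)` computed from the samples `ω`. -/
noncomputable def regretEstimate (G : SimpleGraph V) (Cl' : V → Fin k) (ω : Samples Cl q) : ℝ :=
  (1 / 2) * ∑ i : Fin k, ((cluster Cl i).card : ℝ) / (q : ℝ) *
      ∑ u ∈ cluster Cl i, ∑ s : Fin q, fuv G Cl Cl' u (ω u i s).1
    + ∑ i : Fin k, ∑ u ∈ cluster Cl i, ∑ j : Fin k,
        if i < j then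
          ((cluster Cl j).card : ℝ) / (q : ℝ) *
            ∑ s : Fin q, fuv G Cl Cl' u (ω u j s).1
        else 0

theorem regretEstimate_eq_halfSum (G : SimpleGraph V) (Cl' : V → Fin k) (ω : Samples Cl q) :
    regretEstimate G Cl' ω = halfSum fun i j =>
      #(cluster Cl j) / q * ∑ u ∈ cluster Cl i, ∑ s, fuv G Cl Cl' u (ω u j s) := by
  rw [regretEstimate, halfSum]
  congr 1
  refine sum_congr rfl fun i _ => ?_
  rw [sum_comm]
  refine sum_congr rfl fun j _ => ?_
  split_ifs
  · rw [mul_sum]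
  · exact sum_const_zero

theorem cost_sub_cost_eq_halfSum (G : SimpleGraph V) (Cl Cl' : V → Fin k) :
    cost G Cl' - cost G Cl =
      halfSum fun i j => ∑ u ∈ cluster Cl i, ∑ v ∈ cluster Cl j, fuv G Cl Cl' u v := by
  have hpair : ∀ u v, fuv G Cl Cl' u v =
      (if u ≠ v then costuv G Cl' u v else 0) - if u ≠ v then costuv G Cl u v else 0 := by
    intro u v
    rcases eq_or_ne u v with rfl | huv
    · simp [fuv_self]
    · simp [huv, fuv]
  have htotal : 2 * (cost G Cl' - cost G Cl) = ∑ u, ∑ v, fuv G Cl Cl' u v := by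
    simp only [hpair, sum_sub_distrib, cost]
    ring
  have hsymm := sum_sum_eq_two_mul_halfSum
    (φ := fun i j => ∑ u ∈ cluster Cl i, ∑ v ∈ cluster Cl j, fuv G Cl Cl' u v) fun i j => by
      rw [sum_comm]
      simp only [fuv_comm]
  rw [sum_sum_cluster] at hsymm
  linarith

theorem abs_cost_sub_cost_sub_regretEstimate_le (G : SimpleGraph V) (Cl' : V → Fin k)
    (ω : Samples Cl q) :
    |cost G Cl' - cost G Cl - regretEstimate G Cl' ω| ≤
      ∑ i, ∑ j, |sampleError j (cluster Cl i) (fuv G Cl Cl') ω| := by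
  rw [abs_sub_comm, regretEstimate_eq_halfSum, cost_sub_cost_eq_halfSum, halfSum_sub]
  exact abs_halfSum_le _

theorem fuv_eq_restrictRight (G : SimpleGraph V) {Cl' : V → Fin k} {i j l : Fin k} {u v : V}
    (hu : u ∈ part Cl Cl' i l) (hv : v ∈ cluster Cl j) :
    fuv G Cl Cl' u v = restrictRight (opposing Cl Cl' i j l) (pairSign G Cl) u v := by
  rw [fuv_eq_ite_disagree, restrictRight, Set.indicator_apply]
  exact if_congr (disagree_iff_mem_opposing hu hv) rfl rfl

theorem sampleError_fuv_eq_sum (G : SimpleGraph V) (Cl' : V → Fin k) (i j : Fin k)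
    (ω : Samples Cl q) :
    sampleError j (cluster Cl i) (fuv G Cl Cl') ω =
      ∑ l, sampleError j (part Cl Cl' i l)
        (restrictRight (opposing Cl Cl' i j l) (pairSign G Cl)) ω := by
  simp only [sampleError, ← sum_part Cl Cl' i, sum_sub_distrib, ← mul_sum]
  congr 1
  · congr 1
    exact sum_congr rfl fun l _ => sum_congr rfl fun u hu => sum_congr rfl fun s _ =>
      fuv_eq_restrictRight G hu (mem_cluster.2 (ω u j s).2)
  · exact sum_congr rfl fun l _ => sum_congr rfl fun u hu => sum_congr rfl fun v hv =>
      fuv_eq_restrictRight G hu hv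

theorem sum_abs_sampleError_fuv_le (G : SimpleGraph V) (Cl' : V → Fin k) {δ : ℝ} (hδ : 0 ≤ δ)
    {ω : Samples Cl q} (hω : ∀ i j, ∀ A ⊆ cluster Cl i, ∀ B ⊆ cluster Cl j,
      |sampleError j A (restrictRight B (pairSign G Cl)) ω| ≤
        δ * blockWeight (cluster Cl i) (cluster Cl j) A B) :
    ∑ i, ∑ j, |sampleError j (cluster Cl i) (fuv G Cl Cl') ω| ≤
      δ * ((2 + 4 * k) * dd Cl Cl') := by
  have hblock : ∀ i j, |sampleError j (cluster Cl i) (fuv G Cl Cl') ω| ≤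
      δ * (disagreements Cl Cl' i j + disagreements Cl Cl' i i + disagreements Cl Cl' j j) := by
    intro i j
    rw [sampleError_fuv_eq_sum, ← sum_blockWeight_part_opposing, mul_sum]
    exact (abs_sum_le_sum_abs _ _).trans <| sum_le_sum fun l _ =>
      hω i j _ (part_subset Cl Cl' i l) _ (opposing_subset Cl Cl' i j l)
  calc ∑ i, ∑ j, |sampleError j (cluster Cl i) (fuv G Cl Cl') ω|
      ≤ ∑ i, ∑ j,
          δ * (disagreements Cl Cl' i j + disagreements Cl Cl' i i + disagreements Cl Cl' j j) :=
        sum_le_sum fun i _ => sum_le_sum fun j _ => hblock i j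
    _ = δ * (2 * dd Cl Cl' + 2 * k * ∑ i, disagreements Cl Cl' i i) := by
        simp only [← mul_sum, sum_add_distrib, sum_disagreements, sum_const, card_univ,
          Fintype.card_fin, nsmul_eq_mul]
        ring
    _ ≤ δ * (2 * dd Cl Cl' + 2 * k * (2 * dd Cl Cl')) := by
        gcongr
        exact sum_disagreements_self_le Cl Cl'
    _ = δ * ((2 + 4 * k) * dd Cl Cl') := by ring

theorem abs_cost_sub_cost_sub_regretEstimate_le_of_concentrated {G : SimpleGraph V}
    {ε : ℝ} (hε₀ : 0 ≤ ε) (hε₁ : ε ≤ 1) (hk : 1 ≤ k) {η : ℝ} (hη : η ≤ (ε / (2 * k) / 16) ^ 2)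
    {ω : Samples Cl q} (hpos : Concentrated η (pairSign G Cl) ω)
    (hneg : Concentrated η (-pairSign G Cl) ω) (hone : Concentrated η 1 ω) (Cl' : V → Fin k) :
    |cost G Cl' - cost G Cl - regretEstimate G Cl' ω| ≤ 3 * ε * dd Cl Cl' := by
  have hk' : (1 : ℝ) ≤ k := Nat.one_le_cast.2 hk
  have hδ₀ : 0 ≤ ε / (2 * k) := by positivity
  have hδ₁ : ε / (2 * k) ≤ 1 := div_le_one_of_le₀ (by linarith) (by positivity)
  calc |cost G Cl' - cost G Cl - regretEstimate G Cl' ω|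
      ≤ ε / (2 * k) * ((2 + 4 * k) * dd Cl Cl') :=
        (abs_cost_sub_cost_sub_regretEstimate_le G Cl' ω).trans <|
          sum_abs_sampleError_fuv_le G Cl' hδ₀ fun _ _ _ hA _ hB =>
            abs_sampleError_restrictRight_le hδ₀ hδ₁ hη (abs_pairSign_le_one G Cl) hpos hneg hone
              hA hB
    _ = (2 * ε + ε / k) * dd Cl Cl' := by
        field_simp
        ring
    _ ≤ 3 * ε * dd Cl Cl' := by
        have : ε / k ≤ ε := div_le_self hε₀ hk'
        gcongr
        · exact dd_nonneg Cl Cl'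
        · linarith

end Regret

theorem exp_neg_natCast_mul_log {n : ℝ} (hn : 0 < n) (m : ℕ) :
    Real.exp (-(m * Real.log n)) = (n ^ m)⁻¹ := by
  rw [Real.exp_neg, Real.exp_nat_mul, Real.exp_log hn]

theorem three_mul_mul_inv_pow_le_two_mul_zpow {n k : ℝ} (hn : 2 ≤ n) (hk₀ : 0 ≤ k) (hk : k ≤ n) :
    3 * (36 * k ^ 2 * (n ^ 11)⁻¹) ≤ 2 * n ^ (-3 : ℤ) := by
  have : 0 < n := by linarith
  have hpow : 54 ≤ n ^ 6 := by
    have : (2 : ℝ) ^ 6 ≤ n ^ 6 := by gcongr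
    linarith
  calc 3 * (36 * k ^ 2 * (n ^ 11)⁻¹) ≤ 3 * (36 * n ^ 2 * (n ^ 11)⁻¹) := by gcongr
    _ = 2 * (54 / n ^ 6) * n ^ (-3 : ℤ) := by
        rw [zpow_neg]
        norm_cast
        field_simp
        norm_num
    _ ≤ 2 * n ^ (-3 : ℤ) := by
        have : 54 / n ^ 6 ≤ 1 := div_le_one_of_le₀ hpow (by positivity)
        gcongr
        linarith

theorem one_sub_two_mul_zpow_le_prob_concentrated {V : Type*} [Fintype V] {k q : ℕ}
    {Cl : V → Fin k} (hCl : Function.Surjective Cl) (hn : 2 ≤ Fintype.card V) (hq : 0 < q)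
    {H : Finset (V → V → ℝ)} (hH : ∀ w ∈ H, ∀ u v, |w u v| ≤ 1) (hHcard : #H ≤ 3) :
    1 - 2 * (Fintype.card V : ℝ) ^ (-3 : ℤ) ≤ prob fun ω : Samples Cl q =>
      ∀ w ∈ H, Concentrated (11 * Real.log (Fintype.card V) / q) w ω := by
  have hkn : k ≤ Fintype.card V := by simpa using Fintype.card_le_of_surjective Cl hCl
  have hn' : (2 : ℝ) ≤ Fintype.card V := Nat.ofNat_le_cast.2 hn
  set n : ℝ := (Fintype.card V : ℝ)
  have hη : 0 ≤ 11 * Real.log n / q :=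
    div_nonneg (mul_nonneg (by norm_num) (Real.log_nonneg (by linarith))) q.cast_nonneg
  have hexp : Real.exp (-(11 * Real.log n / q * q)) = (n ^ 11)⁻¹ := by
    rw [div_mul_cancel₀ _ (Nat.cast_ne_zero.2 hq.ne')]
    exact_mod_cast exp_neg_natCast_mul_log (by linarith : 0 < n) 11
  have hcard : n * Real.exp (-(11 * Real.log n / q * q)) ≤ 1 := by
    rw [hexp, ← div_eq_mul_inv]
    exact div_le_one_of_le₀ (le_self_pow₀ (by linarith) (by norm_num)) (by positivity)
  have hfail : #H * (36 * k ^ 2 * Real.exp (-(11 * Real.log n / q * q))) ≤ 2 * n ^ (-3 : ℤ) := by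
    rw [hexp]
    refine le_trans ?_
      (three_mul_mul_inv_pow_le_two_mul_zpow hn' k.cast_nonneg (Nat.cast_le.2 hkn))
    gcongr
    exact_mod_cast hHcard
  exact (sub_le_sub_left hfail 1).trans (one_sub_le_prob_forall_concentrated hCl hq hH hη hcard)

theorem stmt17_general :
    ∃ c₂ : ℝ, 0 < c₂ ∧
      ∀ {V : Type*} [Fintype V] {k q : ℕ} (G : SimpleGraph V) {Cl : V → Fin k},
        Function.Surjective Cl → ∀ {ε : ℝ}, 0 < ε → ε ≤ 1 → 2 ≤ Fintype.card V →
        c₂ * k ^ 2 * Real.log (Fintype.card V) / ε ^ 2 ≤ q →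
        1 - 2 * (Fintype.card V : ℝ) ^ (-3 : ℤ) ≤ prob fun ω : Samples Cl q =>
          ∀ Cl', |cost G Cl' - cost G Cl - regretEstimate G Cl' ω| ≤ 3 * ε * dd Cl Cl' := by
  refine ⟨11 * 32 ^ 2, by norm_num, fun {V _ k q} G {Cl} hCl {ε} hε₀ hε₁ hn hq => ?_⟩
  obtain ⟨v⟩ : Nonempty V := Fintype.card_pos_iff.1 (by omega)
  have hk : 1 ≤ k := (Cl v).pos
  have hk' : (0 : ℝ) < k := Nat.cast_pos.2 hk
  have hlog : 0 < Real.log (Fintype.card V) := Real.log_pos (Nat.one_lt_cast.2 hn)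
  have hq₀ : (0 : ℝ) < q := lt_of_lt_of_le (by positivity) hq
  have hη : 11 * Real.log (Fintype.card V) / q ≤ (ε / (2 * k) / 16) ^ 2 := by
    rw [div_le_iff₀ (by positivity)] at hq ⊢
    field_simp
    linarith
  let H : Finset (V → V → ℝ) := {pairSign G Cl, -pairSign G Cl, 1}
  have hconc := one_sub_two_mul_zpow_le_prob_concentrated hCl hn (Nat.cast_pos.1 hq₀) (H := H)
    (by simp [H, abs_pairSign_le_one]) card_le_three
  refine hconc.trans (prob_mono fun ω hω => ?_)
  exact abs_cost_sub_cost_sub_regretEstimate_le_of_concentrated hε₀.le hε₁ hk hη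
    (hω _ (by simp [H])) (hω _ (by simp [H])) (hω _ (by simp [H]))

/-- the ε-SRRA guarantee, Lemma 3 of the paper.  There is a universal
constant `c₂ > 0` such that the following holds.  Let `ε ∈ (0,1)`, `|V| = n ≥ 2`, and let
`q` be an integer with `q ≥ c₂ k² (log n)/ε⁴`.  Fix a pivotal `k`-clustering `C`
(assignment `Cl`) with all clusters nonempty.  For each `u ∈ V` and `j ∈ [k]`, the sample
`S_{uj}` consists of `q` points drawn independently and uniformly with replacement from
`C_j`; the family of samples is a uniform element `ω` of
`Ω = Π (u : V) (j : Fin k), Fin q → C_j`.  Then with probability at least `1 − 2n⁻³`,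
simultaneously for all `k`-clusterings `C'`: `|f(C') − f̂(C')| ≤ 3ε·d(C,C')`, where
`f(C') = cost(C') − cost(C)` and
`f̂(C') = (1/2) Σ_i (|C_i|/q) Σ_{u∈C_i} Σ_s f_{u,S_{ui}(s)}(C')
        + Σ_i Σ_{u∈C_i} Σ_{j>i} (|C_j|/q) Σ_s f_{u,S_{uj}(s)}(C')`;
i.e. `f̂` is a `3ε`-smooth relative regret approximation with respect to `C`. -/
theorem stmt17 :
    ∃ c₂ : ℝ, 0 < c₂ ∧
      ∀ (V : Type) [Fintype V] (k q : ℕ) (G : SimpleGraph V) (Cl : V → Fin k),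
        (∀ j : Fin k, ∃ v : V, Cl v = j) →
        ∀ ε : ℝ, 0 < ε → ε < 1 → 2 ≤ Fintype.card V →
        c₂ * (k : ℝ) ^ 2 * Real.log (Fintype.card V) / ε ^ 4 ≤ (q : ℝ) →
        1 - 2 * (Fintype.card V : ℝ) ^ (-3 : ℤ) ≤
          ((Finset.univ.filter fun ω : ∀ _u : V, ∀ j : Fin k, Fin q → {v : V // Cl v = j} =>
              ∀ Cl' : V → Fin k,
                |(cost G Cl' - cost G Cl)
                    - ((1 / 2) * ∑ i : Fin k, ((cluster Cl i).card : ℝ) / (q : ℝ) *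
                          ∑ u ∈ cluster Cl i, ∑ s : Fin q, fuv G Cl Cl' u (ω u i s).1
                        + ∑ i : Fin k, ∑ u ∈ cluster Cl i, ∑ j : Fin k,
                            if i < j then
                              ((cluster Cl j).card : ℝ) / (q : ℝ) *
                                ∑ s : Fin q, fuv G Cl Cl' u (ω u j s).1
                            else 0)|
                  ≤ 3 * ε * dd Cl Cl').card : ℝ)
            / (Fintype.card (∀ _u : V, ∀ j : Fin k, Fin q → {v : V // Cl v = j}) : ℝ) := by
  obtain ⟨c₂, hc₂, h⟩ := stmt17_general
  refine ⟨c₂, hc₂, fun V _ k q G Cl hCl ε hε₀ hε₁ hn hq => ?_⟩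
  have : 0 ≤ Real.log (Fintype.card V) := Real.log_natCast_nonneg _
  have hε : ε ^ 4 ≤ ε ^ 2 := pow_le_pow_of_le_one hε₀.le hε₁.le (by norm_num)
  have hq' : c₂ * k ^ 2 * Real.log (Fintype.card V) / ε ^ 2 ≤ q := le_trans (by gcongr) hq
  convert h G hCl hε₀ hε₁.le hn hq' using 1
  rw [prob_eq_card_div_card]
  congr!
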